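/- arXiv:math/0111196 — 2 statements merged into one kernel-verified Lean document; each statement's English description precedes it below -/
import Mathlib

section
/- Let n ≥ 1, set a_i = 3^{i−1} for i = 1,…,n, and let N be an integer with N > 2·Σ_{i=1}^{n} a_i. Define λ = (a_1,…,a_n, N+a_1,…,N+a_n) ∈ ℤ^{2n}. Then the cut associated to λ, namely S_λ = {(x_1,…,x_n,y_1,…,y_n) ∈ {-1,0,1}^{2n} : Σ_{i=1}^{n} a_i·x_i + Σ_{i=1}^{n} (N+a_i)·y_i = 0}, is equal to the set {(x_1,…,x_n,y_1,…,y_n) ∈ {-1,0,1}^{2n} : Σ_{i=1}^{n} y_i = 0 and x_i + y_i = 0 for every i = 1,…,n}. -/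
/-- A vector in ℝ^n with all coordinates in {-1,0,1}. -/
def IsCube {n : ℕ} (x : Fin n → ℝ) : Prop := ∀ i, x i = -1 ∨ x i = 0 ∨ x i = 1

def PlusSet {n : ℕ} (x : Fin n → ℝ) : Set (Fin n) := {i | x i = 1}

def MinusSet {n : ℕ} (x : Fin n → ℝ) : Set (Fin n) := {i | x i = -1}

/-- An `n`-cut: a span-closed subset of {-1,0,1}^n all of whose nonzero elements
have nonempty Plus and Minus sets. -/
def IsCut {n : ℕ} (S : Set (Fin n → ℝ)) : Prop :=
  (∀ x ∈ S, IsCube x) ∧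
  ((Submodule.span ℝ S : Set (Fin n → ℝ)) ∩ {x | IsCube x}) = S ∧
  ∀ x ∈ S, x ≠ 0 → (PlusSet x).Nonempty ∧ (MinusSet x).Nonempty

/-!
Write a vector as `(x, y)`. The equation of the cut is `(∑ yᵢ) N + ∑ (xᵢ + yᵢ) aᵢ = 0`, where the
digits `xᵢ + yᵢ` are integers in `[-2, 2]`. Each term of the sequence `a₁, …, aₙ, N` exceeds twice
the sum of the preceding ones, so a nonzero integer multiple of the largest term cannot be
compensated by the others. Hence `∑ yᵢ` vanishes, and then so do all digits, from the last to the
first.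
-/

section Digits

variable {R ι : Type*} [Ring R] [LinearOrder R] [IsStrictOrderedRing R]

theorem abs_sum_mul_le_mul_sum_abs {s : Finset ι} {d a : ι → R} {B : R}
    (hd : ∀ i ∈ s, |d i| ≤ B) : |∑ i ∈ s, d i * a i| ≤ B * ∑ i ∈ s, |a i| :=
  calc |∑ i ∈ s, d i * a i|
    _ ≤ ∑ i ∈ s, |d i * a i| := Finset.abs_sum_le_sum_abs _ _
    _ ≤ ∑ i ∈ s, B * |a i| := Finset.sum_le_sum fun i hi => by
        rw [abs_mul]
        exact mul_le_mul_of_nonneg_right (hd i hi) (abs_nonneg _)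
    _ = B * ∑ i ∈ s, |a i| := (Finset.mul_sum ..).symm

theorem eq_zero_of_intCast_mul_add_eq_zero {N t : R} {k : ℤ} (ht : |t| < |N|)
    (h : k * N + t = 0) : k = 0 := by
  by_contra hk
  refine ht.not_ge ?_
  calc |N|
    _ ≤ |(k : R)| * |N| :=
        le_mul_of_one_le_left (abs_nonneg N) (by exact_mod_cast Int.one_le_abs hk)
    _ = |t| := by rw [← abs_mul, eq_neg_of_add_eq_zero_left h, abs_neg]

theorem two_mul_sum_abs_pow_lt {x : R} (hx : 3 ≤ |x|) (n : ℕ) :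
    2 * ∑ i ∈ Finset.range n, |x ^ i| < |x ^ n| := by
  simp only [abs_pow]
  calc 2 * ∑ i ∈ Finset.range n, |x| ^ i
    _ ≤ (|x| - 1) * ∑ i ∈ Finset.range n, |x| ^ i :=
        mul_le_mul_of_nonneg_right (le_sub_iff_add_le.mpr (by norm_num [hx]))
          (Finset.sum_nonneg fun i _ => pow_nonneg (abs_nonneg x) i)
    _ = |x| ^ n - 1 := mul_geom_sum _ n
    _ < |x| ^ n := sub_one_lt _

variable {a : ι → R} {z : ι → ℤ} {B : R}

theorem eq_zero_of_intCast_mul_add_sum_eq_zero {s : Finset ι} {N : R} {k : ℤ}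
    (hN : B * ∑ i ∈ s, |a i| < |N|) (hz : ∀ i ∈ s, |(z i : R)| ≤ B)
    (h : k * N + ∑ i ∈ s, z i * a i = 0) : k = 0 :=
  eq_zero_of_intCast_mul_add_eq_zero ((abs_sum_mul_le_mul_sum_abs hz).trans_lt hN) h

variable [LinearOrder ι] [LocallyFiniteOrderBot ι] [Fintype ι]

theorem eq_zero_of_sum_intCast_mul_eq_zero (ha : ∀ i, B * ∑ j ∈ Finset.Iio i, |a j| < |a i|)
    (hz : ∀ i, |(z i : R)| ≤ B) (h : ∑ i, z i * a i = 0) : z = 0 := by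
  by_contra hne
  obtain ⟨m, hm, hmax⟩ : ∃ m, z m ≠ 0 ∧ ∀ i, m < i → z i = 0 := by
    obtain ⟨m, hm⟩ := (Set.toFinite {i | z i ≠ 0}).exists_maximal (Function.ne_iff.mp hne)
    exact ⟨m, hm.prop, fun i hi => by_contra fun hzi => hm.not_prop_of_gt hi hzi⟩
  have sum_Iic : ∑ i ∈ Finset.Iic m, z i * a i = 0 := by
    rw [← h]
    refine Finset.sum_subset (Finset.subset_univ _) fun i _ hi => ?_
    rw [hmax i (by simpa using hi), Int.cast_zero, zero_mul]
  rw [← Finset.Iio_insert, Finset.sum_insert Finset.notMem_Iio_self] at sum_Iic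
  exact hm (eq_zero_of_intCast_mul_add_sum_eq_zero (ha m) (fun i _ => hz i) sum_Iic)

theorem intCast_mul_add_sum_eq_zero_iff {N : R} {k : ℤ}
    (ha : ∀ i, B * ∑ j ∈ Finset.Iio i, |a j| < |a i|) (hN : B * ∑ i, |a i| < |N|)
    (hz : ∀ i, |(z i : R)| ≤ B) :
    k * N + ∑ i, z i * a i = 0 ↔ k = 0 ∧ ∀ i, z i = 0 := by
  refine ⟨fun h => ?_, fun ⟨hk, hz_zero⟩ => by simp [hk, hz_zero]⟩
  have hk : k = 0 := eq_zero_of_intCast_mul_add_sum_eq_zero hN (fun i _ => hz i) h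
  rw [hk, Int.cast_zero, zero_mul, zero_add] at h
  exact ⟨hk, congrFun (eq_zero_of_sum_intCast_mul_eq_zero ha hz h)⟩

end Digits

theorem sum_Iio_eq_sum_range {M : Type*} [AddCommMonoid M] {n : ℕ} (f : ℕ → M) (i : Fin n) :
    ∑ j ∈ Finset.Iio i, f j = ∑ j ∈ Finset.range i, f j := by
  rw [← Nat.Iio_eq_range, ← Fin.map_valEmbedding_Iio, Finset.sum_map]
  rfl

theorem IsCube.exists_intCast {m : ℕ} {v : Fin m → ℝ} (hv : IsCube v) :
    ∃ w : Fin m → ℤ, (∀ i, |w i| ≤ 1) ∧ v = fun i => (w i : ℝ) := by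
  have coord (i : Fin m) : ∃ k : ℤ, |k| ≤ 1 ∧ v i = k := by
    rcases hv i with h | h | h
    · exact ⟨-1, by norm_num, by simp [h]⟩
    · exact ⟨0, by norm_num, by simp [h]⟩
    · exact ⟨1, by norm_num, by simp [h]⟩
  choose w hw hvw using coord
  exact ⟨w, hw, funext hvw⟩

section Parts

variable {α : Type*} {n : ℕ}

/-- The first half `x` of a vector `(x, y)` of length `2 * n`. -/
def xPart (v : Fin (2 * n) → α) (i : Fin n) : α := v ⟨i, by lia⟩

/-- The second half `y` of a vector `(x, y)` of length `2 * n`. -/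
def yPart (v : Fin (2 * n) → α) (i : Fin n) : α := v ⟨i + n, by lia⟩

theorem sum_eq_sum_xPart_add_sum_yPart [AddCommMonoid α] (v : Fin (2 * n) → α) :
    ∑ i, v i = ∑ i, xPart v i + ∑ i, yPart v i := by
  rw [← Fin.sum_congr' v (two_mul n).symm, Fin.sum_univ_add]
  simp only [xPart, yPart, Fin.cast, Fin.val_castAdd, Fin.val_natAdd, add_comm n]

theorem sum_ite_le_eq_sum_yPart [AddCommMonoid α] (v : Fin (2 * n) → α) :
    (∑ i : Fin (2 * n), if n ≤ (i : ℕ) then v i else 0) = ∑ i, yPart v i := by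
  simp [sum_eq_sum_xPart_add_sum_yPart, xPart, yPart, Nat.not_le.mpr (Fin.is_lt _)]

theorem sum_lambda_mul_eq [CommRing α] (a : ℕ → α) (N : α) (v : Fin (2 * n) → α) :
    ∑ i : Fin (2 * n), (if (i : ℕ) < n then a i else N + a (i - n)) * v i =
      (∑ i, yPart v i) * N + ∑ i : Fin n, (xPart v i + yPart v i) * a i := by
  simp only [sum_eq_sum_xPart_add_sum_yPart, xPart, yPart, Fin.is_lt, if_true,
    Nat.not_lt.mpr (Nat.le_add_left _ _), if_false, Nat.add_sub_cancel, Finset.sum_mul,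
    ← Finset.sum_add_distrib]
  exact Finset.sum_congr rfl fun i _ => by ring

theorem forall_add_eq_zero_iff_forall_xPart_add_yPart [Add α] [Zero α] (v : Fin (2 * n) → α) :
    (∀ i : Fin (2 * n), ∀ _ : (i : ℕ) < n, v i + v ⟨i + n, by lia⟩ = 0) ↔
      ∀ i, xPart v i + yPart v i = 0 :=
  ⟨fun h i => h ⟨i, by lia⟩ i.isLt, fun h i hi => h ⟨i, hi⟩⟩

end Parts

theorem cut_of_lambda_n_general (n : ℕ) (a : ℕ → ℝ) (N : ℝ)
    (ha : ∀ i < n, 2 * ∑ j ∈ Finset.range i, |a j| < |a i|)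
    (hN : 2 * ∑ i ∈ Finset.range n, |a i| < |N|) :
    {v : Fin (2 * n) → ℝ | IsCube v ∧
        ∑ i : Fin (2 * n), (if (i : ℕ) < n then a i else N + a (i - n)) * v i = 0} =
      {v : Fin (2 * n) → ℝ | IsCube v ∧
        (∑ i : Fin (2 * n), if n ≤ (i : ℕ) then v i else 0) = 0 ∧
        ∀ i : Fin (2 * n), ∀ _ : (i : ℕ) < n, v i + v ⟨i + n, by lia⟩ = 0} := by
  ext v
  refine and_congr_right fun hv => ?_
  obtain ⟨w, hw, rfl⟩ := hv.exists_intCast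
  have ha_fin (i : Fin n) : 2 * ∑ j ∈ Finset.Iio i, |a j| < |a i| :=
    (sum_Iio_eq_sum_range (|a ·|) i).symm ▸ ha i i.isLt
  have hN_fin : 2 * ∑ i : Fin n, |a i| < |N| := by
    rwa [Fin.sum_univ_eq_sum_range (|a ·|)]
  have digit_le (i : Fin n) : |((xPart w i + yPart w i : ℤ) : ℝ)| ≤ 2 := by
    exact_mod_cast (abs_add_le _ _).trans (add_le_add (hw _) (hw _))
  rw [sum_lambda_mul_eq, sum_ite_le_eq_sum_yPart, forall_add_eq_zero_iff_forall_xPart_add_yPart]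
  have key := intCast_mul_add_sum_eq_zero_iff (k := ∑ i, yPart w i) ha_fin hN_fin digit_le
  simp only [xPart, yPart] at key ⊢
  exact_mod_cast key

/-- for `a_i = 3^{i-1}` and `N > 2·Σ a_i`, the cut associated to
`λ = (a_1,…,a_n, N+a_1,…,N+a_n)` consists exactly of the cube vectors
`(x,y)` with `Σ y_i = 0` and `x_i + y_i = 0` for all `i`. -/
theorem cut_of_lambda_n (n : ℕ) (hn : 1 ≤ n) (N : ℤ)
    (hN : 2 * ∑ i ∈ Finset.range n, (3 : ℤ) ^ i < N) :
    {v : Fin (2 * n) → ℝ | IsCube v ∧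
        ∑ i : Fin (2 * n),
          (if (i : ℕ) < n then ((3 : ℝ) ^ (i : ℕ)) else ((N : ℝ) + 3 ^ ((i : ℕ) - n)))
            * v i = 0} =
      {v : Fin (2 * n) → ℝ | IsCube v ∧
        (∑ i : Fin (2 * n), if n ≤ (i : ℕ) then v i else 0) = 0 ∧
        ∀ i : Fin (2 * n), ∀ _ : (i : ℕ) < n,
          v i + v ⟨(i : ℕ) + n, by have := i.isLt; omega⟩ = 0} := by
  refine cut_of_lambda_n_general n _ N (fun i _ => two_mul_sum_abs_pow_lt (by norm_num) i) ?_
  simpa using lt_of_lt_of_le (by exact_mod_cast hN) (le_abs_self (N : ℝ))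
end

section
/- Let a ≥ 2, k ≥ 1 and l ≥ 1 be integers, and write l = a·m + ε with integers m ≥ 0 and 0 ≤ ε ≤ a−1. If k ≥ 2 or ε ≥ 2, then the closed stratum Σ_{(a^k,1^l)}^{S^1} of the n-fold symmetric smash product (S^1)^{(n)}, where n = a·k + l and the partition (a^k,1^l) consists of k parts equal to a and l parts equal to 1, is contractible. -/
/-- Two `n`-tuples are related if one is a permutation of the other. -/
def permRel (n : ℕ) (X : Type) : (Fin n → X) → (Fin n → X) → Prop :=
  fun x y => ∃ σ : Equiv.Perm (Fin n), x ∘ σ = y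

/-- `Sym^n X`: the quotient of `X^n` by the permutation action of `S_n`,
with the quotient topology. -/
def SymQ (n : ℕ) (X : Type) [TopologicalSpace X] : Type :=
  Quot (permRel n X)

instance (n : ℕ) (X : Type) [TopologicalSpace X] : TopologicalSpace (SymQ n X) :=
  inferInstanceAs (TopologicalSpace (Quot _))

/-- The relation collapsing the set of multisets containing the basepoint. -/
def infRel (n : ℕ) (X : Type) [TopologicalSpace X] (star : X) :
    SymQ n X → SymQ n X → Prop :=
  fun p q => p = q ∨
    ((∃ y : Fin n → X, p = Quot.mk _ y ∧ ∃ i, y i = star) ∧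
     (∃ y : Fin n → X, q = Quot.mk _ y ∧ ∃ i, y i = star))

/-- `X^{(n)}`, the `n`-fold symmetric smash product: the quotient of `Sym^n X`
collapsing all multisets containing the basepoint to a single point. -/
def SymSmash (n : ℕ) (X : Type) [TopologicalSpace X] (star : X) : Type :=
  Quot (infRel n X star)

instance (n : ℕ) (X : Type) [TopologicalSpace X] (star : X) :
    TopologicalSpace (SymSmash n X star) :=
  inferInstanceAs (TopologicalSpace (Quot _))

/-- The canonical projection `X^n → X^{(n)}`. -/
def symProj (n : ℕ) (X : Type) [TopologicalSpace X] (star : X) (y : Fin n → X) :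
    SymSmash n X star :=
  Quot.mk _ (Quot.mk _ y)

/-- The closed stratum `Σ_λ^X ⊆ X^{(n)}` for a partition `λ` of `n` with `m` parts:
the image of the map `X^m → X^{(n)}` sending `(x_1,…,x_m)` to the class of the
multiset with `λ_i` copies of `x_i`. -/
def stratum (n m : ℕ) (lam : Fin m → ℕ) (X : Type) [TopologicalSpace X] (star : X) :
    Set (SymSmash n X star) :=
  {p | ∃ y : Fin n → X, p = symProj n X star y ∧
    ∃ x : Fin m → X, Multiset.map y Finset.univ.val =
      (Finset.univ.val : Multiset (Fin m)).bind
        (fun i => Multiset.replicate (lam i) (x i))}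

/-- The circle `S^1`, as the unit sphere in `ℝ²`. -/
abbrev Circle1 : Type := ↥(Metric.sphere (0 : EuclideanSpace ℝ (Fin 2)) 1)

/-!
Cutting the circle at the base point represents the points of the smash product by nondecreasing
tuples in `[0, 1]`. Let `B_j` consist of the base point and the classes of the multisets containing
`j` disjoint blocks of `a` equal points. The stratum is `B_k`, and `B_j` is a single point as soon
as `a * j` exceeds the number of points, so it suffices to deform `B_k` within itself into
`B_(k+1)`, and then to increase `k`.

A point of `B_k` is represented by `k` sorted entries of multiplicity `a` and `L` further sorted
entries. This representation is unique unless the base point occurs or `a` of the further entries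
coincide. A deformation of the representing tuples therefore descends to `B_k` if it keeps the base
point in the multiset and is stationary where `a` of the further entries coincide. For `2 ≤ k`,
contract the first entry of multiplicity `a` towards `0`. For `2 ≤ ε`, slide those further entries
whose index is divisible by `a` towards their predecessors. Either way some entry reaches the base
point or `a` of the further entries come close together, and a reparametrization of `[0, 1]` then
makes close entries equal. In both cases the last entry of the sorted tuple concerned stays in
place, and it is `1` if any of them is, so the base point is kept.
-/

open Set Topology

section SymmetricSmash

variable {n : ℕ} {X : Type}

theorem permRel_equivalence : Equivalence (permRel n X) where
  refl _ := ⟨1, rfl⟩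
  symm := by
    rintro _ _ ⟨σ, rfl⟩
    exact ⟨σ⁻¹, funext fun i => by simp⟩
  trans := by
    rintro _ _ _ ⟨σ, rfl⟩ ⟨τ, rfl⟩
    exact ⟨σ * τ, rfl⟩

theorem permRel_iff_map_univ_eq {y y' : Fin n → X} :
    permRel n X y y' ↔ Finset.univ.val.map y = Finset.univ.val.map y' := by
  classical
  constructor
  · rintro ⟨σ, rfl⟩
    rw [← Multiset.map_map, Multiset.map_univ_val_equiv]
  · intro h
    have fiberEquiv (z : X) : Nonempty ({i // y' i = z} ≃ {i // y i = z}) := by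
      have hcount := congrArg (Multiset.count z) h
      rw [Multiset.count_map, Multiset.count_map] at hcount
      rw [← Fintype.card_eq, Fintype.card_subtype, Fintype.card_subtype]
      simpa only [Finset.card_def, Finset.filter_val, eq_comm] using hcount.symm
    exact ⟨Equiv.ofFiberEquiv fun z => (fiberEquiv z).some,
      funext fun i => Equiv.ofFiberEquiv_map _ i⟩

theorem permRel.range_eq {y y' : Fin n → X} (h : permRel n X y y') : range y = range y' := by
  obtain ⟨σ, rfl⟩ := h
  exact (σ.surjective.range_comp y).symm

theorem quot_mk_permRel_eq_iff {y y' : Fin n → X} :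
    Quot.mk (permRel n X) y = Quot.mk (permRel n X) y' ↔ permRel n X y y' :=
  Quot.eq.trans permRel_equivalence.eqvGen_iff

variable [TopologicalSpace X] {star : X}

theorem infRel_equivalence : Equivalence (infRel n X star) where
  refl _ := Or.inl rfl
  symm := by
    rintro _ _ (rfl | ⟨hp, hq⟩)
    exacts [Or.inl rfl, Or.inr ⟨hq, hp⟩]
  trans := by
    rintro _ _ _ (rfl | ⟨hp, hq⟩) (rfl | ⟨hq', hr⟩)
    exacts [Or.inl rfl, Or.inr ⟨hq', hr⟩, Or.inr ⟨hp, hq⟩, Or.inr ⟨hp, hr⟩]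

theorem symProj_eq_iff {y y' : Fin n → X} :
    symProj n X star y = symProj n X star y' ↔
      permRel n X y y' ∨ star ∈ range y ∧ star ∈ range y' := by
  have mem_iff (y : Fin n → X) :
      (∃ z, (Quot.mk _ y : SymQ n X) = Quot.mk _ z ∧ ∃ i, z i = star) ↔ star ∈ range y := by
    constructor
    · rintro ⟨z, hyz, hz⟩
      rwa [(quot_mk_permRel_eq_iff.mp hyz).range_eq]
    · exact fun h => ⟨y, rfl, h⟩
  refine Quot.eq.trans (infRel_equivalence.eqvGen_iff.trans ?_)
  exact or_congr quot_mk_permRel_eq_iff (and_congr (mem_iff y) (mem_iff y'))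

theorem symProj_eq_of_map_univ_eq {y y' : Fin n → X}
    (h : Finset.univ.val.map y = Finset.univ.val.map y') :
    symProj n X star y = symProj n X star y' :=
  symProj_eq_iff.mpr (Or.inl (permRel_iff_map_univ_eq.mpr h))

theorem symProj_eq_of_mem_range {y y' : Fin n → X} (h : star ∈ range y) (h' : star ∈ range y') :
    symProj n X star y = symProj n X star y' :=
  symProj_eq_iff.mpr (Or.inr ⟨h, h'⟩)

theorem isQuotientMap_symProj : IsQuotientMap (symProj n X star) :=
  isQuotientMap_quot_mk.comp isQuotientMap_quot_mk

theorem isClosed_setOf_mem_range [T1Space X] : IsClosed {y : Fin n → X | star ∈ range y} := by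
  have h : {y : Fin n → X | star ∈ range y} = ⋃ i, {y | y i = star} := by
    ext y
    simp
  rw [h]
  exact isClosed_iUnion_of_finite fun i => isClosed_singleton.preimage (continuous_apply i)

theorem isClosedMap_symProj [T1Space X] : IsClosedMap (symProj n X star) := by
  intro C hC
  have hperm : IsClosed (⋃ σ : Equiv.Perm (Fin n), {y : Fin n → X | y ∘ σ ∈ C}) :=
    isClosed_iUnion_of_finite fun σ => hC.preimage (by fun_prop)
  have hstar : IsClosed {y : Fin n → X | star ∈ range y ∧ ∃ z ∈ C, star ∈ range z} :=
    isClosed_setOf_mem_range.and isClosed_const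
  rw [← isQuotientMap_symProj.isClosed_preimage]
  convert hperm.union hstar using 1
  ext y
  simp only [mem_preimage, mem_image, symProj_eq_iff, mem_union, mem_iUnion, mem_ofPred_eq]
  constructor
  · rintro ⟨z, hz, h | ⟨hz', hy⟩⟩
    · obtain ⟨σ, rfl⟩ := permRel_equivalence.symm h
      exact Or.inl ⟨σ, hz⟩
    · exact Or.inr ⟨hy, z, hz, hz'⟩
  · rintro (⟨σ, hσ⟩ | ⟨hy, z, hz, hz'⟩)
    · exact ⟨y ∘ σ, hσ, Or.inl (permRel_equivalence.symm ⟨σ, rfl⟩)⟩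
    · exact ⟨z, hz, Or.inr ⟨hz', hy⟩⟩

theorem t2Space_of_isClosedMap {Y Z : Type*} [TopologicalSpace Y] [TopologicalSpace Z] [T4Space Y]
    {f : Y → Z} (hf : Continuous f) (hclosed : IsClosedMap f) (hsurj : f.Surjective) :
    T2Space Z := by
  have isClosed_fiber (z : Z) : IsClosed (f ⁻¹' {z}) := by
    obtain ⟨y, rfl⟩ := hsurj z
    simpa using (hclosed {y} isClosed_singleton).preimage hf
  refine ⟨fun z z' hne => ?_⟩
  obtain ⟨U, V, hU, hV, hzU, hzV, hUV⟩ := normal_separation (isClosed_fiber z) (isClosed_fiber z')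
    ((disjoint_singleton.mpr hne).preimage f)
  refine ⟨kernImage f U, kernImage f V, isClosedMap_iff_kernImage.mp hclosed hU,
    isClosedMap_iff_kernImage.mp hclosed hV, fun _ hx => hzU hx, fun _ hx => hzV hx, ?_⟩
  rw [Set.disjoint_left]
  intro w hwU hwV
  obtain ⟨x, rfl⟩ := hsurj w
  exact Set.disjoint_left.mp hUV (hwU rfl) (hwV rfl)

instance [CompactSpace X] [T2Space X] : T2Space (SymSmash n X star) :=
  t2Space_of_isClosedMap isQuotientMap_symProj.continuous isClosedMap_symProj
    isQuotientMap_symProj.surjective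

end SymmetricSmash

section LoopParametrization

/-- A continuous parametrization of a pointed space by `[0, 1]` whose only identification is that of
the two end points, which go to the base point. The values outside `[0, 1]` are irrelevant. -/
structure IsLoopParam {X : Type*} [TopologicalSpace X] (star : X) (E : ℝ → X) : Prop where
  continuous : Continuous E
  surjOn : SurjOn E (Icc 0 1) univ
  eq_star_iff : ∀ s ∈ Icc (0 : ℝ) 1, E s = star ↔ s = 0 ∨ s = 1
  injOn : InjOn E (Ioo 0 1)

theorem isLoopParam_coe_unitAddCircle :
    IsLoopParam (0 : UnitAddCircle) ((↑) : ℝ → UnitAddCircle) where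
  continuous := AddCircle.continuous_mk' 1
  surjOn := by
    have h := AddCircle.coe_image_Icc_eq (1 : ℝ) 0
    rw [zero_add] at h
    exact h.ge
  eq_star_iff s hs := by
    rw [AddCircle.coe_eq_zero_iff]
    constructor
    · rintro ⟨z, rfl⟩
      rw [zsmul_one] at hs ⊢
      have h0 : 0 ≤ z := by exact_mod_cast hs.1
      have h1 : z ≤ 1 := by exact_mod_cast hs.2
      interval_cases z <;> simp
    · rintro (rfl | rfl)
      exacts [⟨0, by simp⟩, ⟨1, by simp⟩]
  injOn s hs t ht h := by
    have hIoo {r : ℝ} (hr : r ∈ Ioo (0 : ℝ) 1) : r ∈ Ico 0 (0 + 1) := by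
      simpa using Ioo_subset_Ico_self hr
    exact (AddCircle.coe_eq_coe_iff_of_mem_Ico (hIoo hs) (hIoo ht)).mp h

theorem IsLoopParam.homeomorph_comp {X Y : Type*} [TopologicalSpace X] [TopologicalSpace Y]
    {star : X} {E : ℝ → X} (hE : IsLoopParam star E) (h : X ≃ₜ Y) :
    IsLoopParam (h star) (h ∘ E) where
  continuous := h.continuous.comp hE.continuous
  surjOn := h.surjective.surjOn.comp hE.surjOn
  eq_star_iff s hs := h.injective.eq_iff.trans (hE.eq_star_iff s hs)
  injOn := h.injective.comp_injOn hE.injOn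

/-- The circle, as a quotient of the line. -/
noncomputable def unitAddCircleHomeomorphCircle1 : UnitAddCircle ≃ₜ Circle1 :=
  (AddCircle.homeomorphCircle one_ne_zero).trans <|
    Complex.orthonormalBasisOneI.repr.toHomeomorph.subtype fun z => by
      change z ∈ Submonoid.unitSphere ℂ ↔ _
      simp [Submonoid.unitSphere]

theorem exists_isLoopParam_circle1 (star : Circle1) : ∃ E, IsLoopParam star E := by
  let h := (Homeomorph.addRight (unitAddCircleHomeomorphCircle1.symm star)).trans
    unitAddCircleHomeomorphCircle1
  refine ⟨_, (?_ : h 0 = star) ▸ isLoopParam_coe_unitAddCircle.homeomorph_comp h⟩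
  simp [h]

variable {X : Type} [TopologicalSpace X] {star : X} {E : ℝ → X}

theorem IsLoopParam.permRel_of_permRel_comp (hE : IsLoopParam star E) {n : ℕ} {x x' : Fin n → ℝ}
    (hx : ∀ i, x i ∈ Icc (0 : ℝ) 1) (hx' : ∀ i, x' i ∈ Icc (0 : ℝ) 1)
    (h : permRel n X (E ∘ x) (E ∘ x')) (hstar : star ∉ range (E ∘ x)) : permRel n ℝ x x' := by
  have mem_Ioo {z : Fin n → ℝ} (hz : ∀ i, z i ∈ Icc (0 : ℝ) 1) (hz' : star ∉ range (E ∘ z))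
      (i : Fin n) : z i ∈ Ioo (0 : ℝ) 1 := by
    have hends := mt (hE.eq_star_iff _ (hz i)).mpr fun hi => hz' ⟨i, hi⟩
    rw [not_or] at hends
    exact ⟨(hz i).1.lt_of_ne' hends.1, (hz i).2.lt_of_ne hends.2⟩
  have hstar' : star ∉ range (E ∘ x') := h.range_eq ▸ hstar
  obtain ⟨σ, hσ⟩ := h
  exact ⟨σ, funext fun i => hE.injOn (mem_Ioo hx hstar _) (mem_Ioo hx' hstar' i) (congrFun hσ i)⟩

end LoopParametrization

section Collapse

variable {ι : Type*} [Fintype ι] {η : ℝ} {x : ι → ℝ}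

/-- A density on the line that vanishes exactly at distance at most `η` from some `x i`. -/
noncomputable def collapseDensity (η : ℝ) (x : ι → ℝ) (u : ℝ) : ℝ :=
  ∏ i, max 0 (|u - x i| - η)

/-- A path, parametrized by `t`, of self-maps of `[0, 1]` fixing the end points. It starts at the
identity and ends at a map that is constant near each `x i`. -/
noncomputable def collapse (η : ℝ) (x : ι → ℝ) (t s : ℝ) : ℝ :=
  (1 - t) * s + t * ((∫ u in 0..s, collapseDensity η x u) / ∫ u in 0..1, collapseDensity η x u)

theorem continuous_uncurry_collapseDensity :
    Continuous fun p : (ι → ℝ) × ℝ => collapseDensity η p.1 p.2 := by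
  unfold collapseDensity
  fun_prop

theorem continuous_collapseDensity (x : ι → ℝ) : Continuous (collapseDensity η x) :=
  continuous_uncurry_collapseDensity.comp (Continuous.prodMk_right x)

theorem collapseDensity_nonneg (x : ι → ℝ) (u : ℝ) : 0 ≤ collapseDensity η x u :=
  Finset.prod_nonneg fun _ _ => le_max_left _ _

theorem collapseDensity_eq_zero {u : ℝ} {i : ι} (h : |u - x i| ≤ η) : collapseDensity η x u = 0 :=
  Finset.prod_eq_zero (Finset.mem_univ i) (max_eq_left (sub_nonpos.mpr h))

theorem exists_mem_Ioo_lt_abs_sub (hη : 2 * η * Fintype.card ι < 1) (x : ι → ℝ) :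
    ∃ u ∈ Ioo (0 : ℝ) 1, ∀ i, η < |u - x i| := by
  by_contra! hcover
  have hsubset : Ioo (0 : ℝ) 1 ⊆ ⋃ i, Metric.closedBall (x i) η := fun u hu => by
    simpa only [mem_iUnion, Metric.mem_closedBall, Real.dist_eq] using hcover u hu
  have hvolume := calc
    (1 : ENNReal) = MeasureTheory.volume (Ioo (0 : ℝ) 1) := by simp
    _ ≤ ∑ i, MeasureTheory.volume (Metric.closedBall (x i) η) :=
      (MeasureTheory.measure_mono hsubset).trans (MeasureTheory.measure_iUnion_fintype_le _ _)
    _ = ENNReal.ofReal (2 * η * Fintype.card ι) := by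
      simp [Real.volume_closedBall, mul_comm, ENNReal.ofReal_mul]
  exact absurd hvolume (not_le.mpr (ENNReal.ofReal_lt_one.mpr hη))

theorem integral_collapseDensity_pos (hη : 2 * η * Fintype.card ι < 1) (x : ι → ℝ) :
    0 < ∫ u in (0 : ℝ)..1, collapseDensity η x u := by
  obtain ⟨u, hu, hfar⟩ := exists_mem_Ioo_lt_abs_sub hη x
  exact intervalIntegral.integral_pos zero_lt_one (continuous_collapseDensity x).continuousOn
    (fun v _ => collapseDensity_nonneg x v)
    ⟨u, Ioo_subset_Icc_self hu,
      Finset.prod_pos fun i _ => lt_max_of_lt_right (sub_pos.mpr (hfar i))⟩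

theorem continuous_collapse {Y : Type*} [TopologicalSpace Y] [FirstCountableTopology Y]
    (hη : 2 * η * Fintype.card ι < 1) {x : Y → ι → ℝ} {t s : Y → ℝ} (hx : Continuous x)
    (ht : Continuous t) (hs : Continuous s) :
    Continuous fun y => collapse η (x y) (t y) (s y) := by
  have hdensity : Continuous (Function.uncurry fun y u => collapseDensity η (x y) u) :=
    continuous_uncurry_collapseDensity.comp (hx.prodMap continuous_id)
  have hint {s : Y → ℝ} (hs : Continuous s) :
      Continuous fun y => ∫ u in 0..s y, collapseDensity η (x y) u :=
    intervalIntegral.continuous_parametric_intervalIntegral_of_continuous hdensity hs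
  exact ((continuous_const.sub ht).mul hs).add <| ht.mul <| (hint hs).div (hint continuous_const)
    fun y => (integral_collapseDensity_pos hη (x y)).ne'

theorem collapse_zero_left (x : ι → ℝ) (s : ℝ) : collapse η x 0 s = s := by
  simp [collapse]

theorem collapse_zero (x : ι → ℝ) (t : ℝ) : collapse η x t 0 = 0 := by
  simp [collapse]

theorem collapse_one (hη : 2 * η * Fintype.card ι < 1) (x : ι → ℝ) (t : ℝ) :
    collapse η x t 1 = 1 := by
  rw [collapse, div_self (integral_collapseDensity_pos hη x).ne']
  ring

theorem collapse_one_eq_of_abs_sub_le {s : ℝ} {i : ι} (h : |s - x i| ≤ η) :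
    collapse η x 1 s = collapse η x 1 (x i) := by
  have hint (b c : ℝ) : IntervalIntegrable (collapseDensity η x) MeasureTheory.volume b c :=
    (continuous_collapseDensity x).intervalIntegrable b c
  have hzero : ∫ u in x i..s, collapseDensity η x u = 0 :=
    intervalIntegral.integral_zero_ae <| .of_forall fun u hu => collapseDensity_eq_zero <|
      (abs_sub_left_of_mem_uIcc (uIoc_subset_uIcc hu)).trans h
  rw [collapse, collapse, ← intervalIntegral.integral_add_adjacent_intervals (hint 0 (x i))
    (hint (x i) s), hzero, add_zero, sub_self, zero_mul, zero_mul]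

theorem collapse_comp_perm (x : ι → ℝ) (σ : Equiv.Perm ι) :
    collapse η (x ∘ σ) = collapse η x := by
  have hdensity : collapseDensity η (x ∘ σ) = collapseDensity η x :=
    funext fun u => Equiv.prod_comp σ fun i => max 0 (|u - x i| - η)
  funext t s
  rw [collapse, collapse, hdensity]

end Collapse

section Cluster

variable {ι α : Type*} [PseudoMetricSpace α] {a : ℕ} {η μ : ℝ} {r : ι → α}

/-- Some `a` entries of the tuple `r` are at mutual distance at most `η`. -/
def HasCluster (a : ℕ) (η : ℝ) (r : ι → α) : Prop :=
  ∃ s : Finset ι, s.card = a ∧ ∀ i ∈ s, ∀ j ∈ s, dist (r i) (r j) ≤ η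

/-- A continuous function of the tuple `r` with values in `[0, 1]`, equal to `0` where `a` entries
of `r` coincide and to `1` where no `a` entries are at mutual distance at most `μ`. -/
noncomputable def clusterGauge [Fintype ι] (a : ℕ) (μ : ℝ) (r : ι → α) : ℝ :=
  ∏ s ∈ Finset.powersetCard a Finset.univ, min 1 ((∑ i ∈ s, ∑ j ∈ s, dist (r i) (r j)) / μ)

theorem hasCluster_zero_of_le_count [Fintype ι] [DecidableEq α] {z : α}
    (h : a ≤ (Finset.univ.val.map r).count z) : HasCluster a 0 r := by
  rw [Multiset.count_map] at h
  obtain ⟨s, hs, hcard⟩ := Finset.exists_subset_card_eq (s := {i | z = r i}) h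
  have eq_z {i : ι} (hi : i ∈ s) : r i = z := (Finset.mem_filter.mp (hs hi)).2.symm
  exact ⟨s, hcard, fun i hi j hj => by rw [eq_z hi, eq_z hj, dist_self]⟩

section Gauge

variable [Fintype ι]

theorem continuous_clusterGauge : Continuous (clusterGauge a μ : (ι → α) → ℝ) := by
  unfold clusterGauge
  fun_prop

theorem clusterGauge_mem_Icc (hμ : 0 ≤ μ) (r : ι → α) : clusterGauge a μ r ∈ Icc 0 1 := by
  have nonneg (s : Finset ι) : 0 ≤ min 1 ((∑ i ∈ s, ∑ j ∈ s, dist (r i) (r j)) / μ) := by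
    positivity
  exact ⟨Finset.prod_nonneg fun s _ => nonneg s,
    Finset.prod_le_one (fun s _ => nonneg s) fun s _ => min_le_left _ _⟩

theorem HasCluster.clusterGauge_eq_zero (h : HasCluster a 0 r) : clusterGauge a μ r = 0 := by
  obtain ⟨s, hs, hr⟩ := h
  refine Finset.prod_eq_zero (Finset.mem_powersetCard.mpr ⟨s.subset_univ, hs⟩) ?_
  have hsum : ∑ i ∈ s, ∑ j ∈ s, dist (r i) (r j) = 0 :=
    Finset.sum_eq_zero fun i hi => Finset.sum_eq_zero fun j hj =>
      (hr i hi j hj).antisymm dist_nonneg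
  simp [hsum]

theorem hasCluster_of_clusterGauge_ne_one (hμ : 0 < μ) (h : clusterGauge a μ r ≠ 1) :
    HasCluster a μ r := by
  obtain ⟨s, hs, hlt⟩ : ∃ s ∈ Finset.powersetCard a Finset.univ,
      (∑ i ∈ s, ∑ j ∈ s, dist (r i) (r j)) / μ < 1 := by
    contrapose! h
    exact Finset.prod_eq_one fun s hs => min_eq_left (h s hs)
  refine ⟨s, (Finset.mem_powersetCard.mp hs).2, fun i hi j hj => ?_⟩
  calc
    dist (r i) (r j) ≤ ∑ j ∈ s, dist (r i) (r j) :=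
      Finset.single_le_sum (f := fun j => dist (r i) (r j)) (fun _ _ => dist_nonneg) hj
    _ ≤ ∑ i ∈ s, ∑ j ∈ s, dist (r i) (r j) :=
      Finset.single_le_sum (f := fun i => ∑ j ∈ s, dist (r i) (r j))
        (fun _ _ => Finset.sum_nonneg fun _ _ => dist_nonneg) hi
    _ ≤ μ := ((div_lt_one hμ).mp hlt).le

end Gauge

variable {L : ℕ} {r : Fin L → ℝ}

theorem hasCluster_of_window {p : ℕ} {c : ℝ} (hp : p + a ≤ L)
    (h : ∀ i : Fin L, p ≤ i → i < p + a → r i ∈ Icc c (c + η)) : HasCluster a η r := by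
  refine ⟨Finset.univ.map ((Fin.natAddEmb p).trans (Fin.castLEEmb hp)), by simp, ?_⟩
  have window {i : Fin L} (hi : i ∈ Finset.univ.map ((Fin.natAddEmb p).trans (Fin.castLEEmb hp))) :
      r i ∈ Icc c (c + η) := by
    obtain ⟨j, -, rfl⟩ := Finset.mem_map.mp hi
    exact h _ (by simp) (by simp)
  intro i hi j hj
  simpa using Real.dist_le_of_mem_Icc (window hi) (window hj)

theorem HasCluster.exists_window (h : HasCluster a η r) (ha : 0 < a) (hr : Monotone r) :
    ∃ p q : Fin L, (p : ℕ) + a = q + 1 ∧ r q - r p ≤ η := by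
  obtain ⟨s, hs, hdist⟩ := h
  have hne : s.Nonempty := Finset.card_pos.mp (hs ▸ ha)
  have hcard : a ≤ s.max' hne + 1 - s.min' hne := by
    have hsubset : s ⊆ Finset.Icc (s.min' hne) (s.max' hne) := fun i hi =>
      Finset.mem_Icc.mpr ⟨s.min'_le i hi, s.le_max' i hi⟩
    simpa [hs] using Finset.card_le_card hsubset
  refine ⟨s.min' hne, ⟨s.min' hne + a - 1, by omega⟩, by simp only; omega, ?_⟩
  calc
    _ ≤ r (s.max' hne) - r (s.min' hne) := by
      gcongr
      exact hr (Fin.le_def.mpr (by simp only; omega))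
    _ ≤ η := (le_abs_self _).trans (hdist _ (s.max'_mem hne) _ (s.min'_mem hne))

end Cluster

section SortedTuples

theorem eq_of_monotone_of_map_univ_eq {α : Type} [PartialOrder α] {m : ℕ} {q q' : Fin m → α}
    (hq : Monotone q) (hq' : Monotone q')
    (h : Finset.univ.val.map q = Finset.univ.val.map q') : q = q' := by
  obtain ⟨σ, rfl⟩ := permRel_iff_map_univ_eq.mpr h
  exact Tuple.unique_monotone (σ := 1) hq hq'

theorem exists_map_univ_eq {α : Type*} {m : ℕ} {S : Multiset α} (hS : S.card = m) :
    ∃ q : Fin m → α, Finset.univ.val.map q = S := by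
  subst hS
  induction S using Quot.inductionOn with
  | _ l => exact ⟨l.get, (Fin.univ_val_map _).trans (congrArg _ (List.ofFn_get l))⟩

theorem map_univ_eq_sum_singleton {ι α : Type*} [Fintype ι] (f : ι → α) :
    Finset.univ.val.map f = ∑ i, {f i} := by
  rw [Finset.sum, ← Multiset.sum_map_singleton (Finset.univ.val.map f), Multiset.map_map]
  rfl

/-- The multiplicities of `R'` are those of `R` reduced modulo `a`, so `R' ≤ R`, and equality of the
cardinalities does the rest. -/
theorem nsmul_add_unique {α : Type*} [DecidableEq α] {a : ℕ} {Q Q' R R' : Multiset α} (ha : 0 < a)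
    (h : a • Q + R = a • Q' + R') (hcard : R.card = R'.card) (hR' : ∀ z, R'.count z < a) :
    Q = Q' ∧ R = R' := by
  have hle : R' ≤ R := Multiset.le_iff_count.mpr fun z => by
    have hz := congrArg (Multiset.count z · % a) h
    simp only [Multiset.count_add, Multiset.count_nsmul, Nat.mul_add_mod,
      Nat.mod_eq_of_lt (hR' z)] at hz
    exact hz ▸ Nat.mod_le _ _
  obtain rfl : R' = R := Multiset.eq_of_le_of_card_le hle hcard.le
  refine ⟨Multiset.ext.mpr fun z => Nat.eq_of_mul_eq_mul_left ha ?_, rfl⟩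
  rw [← Multiset.count_nsmul, add_right_cancel h, Multiset.count_nsmul]

/-- The index map under which a tuple on `Fin k ⊕ Fin L` pulls back to the tuple listing each of its
first `k` entries `a` times and each of the other entries once. -/
def blockIndex (a : ℕ) {k L : ℕ} : Fin (a * k + L) → Fin k ⊕ Fin L :=
  Sum.map (fun p => (finProdFinEquiv.symm p).2) id ∘ finSumFinEquiv.symm

/-- The nondecreasing tuples with entries in `[0, 1]`. For the index type `Fin k ⊕ Fin L`, whose two
summands are incomparable, these are the pairs of nondecreasing tuples. -/
def sortedTuples (ι : Type*) [Preorder ι] : Set (ι → ℝ) :=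
  {v | Monotone v ∧ ∀ i, v i ∈ Icc 0 1}

/-- Some entry is an end point of `[0, 1]`. -/
def HasEnd {ι : Type*} (v : ι → ℝ) : Prop :=
  ∃ i, v i = 0 ∨ v i = 1

theorem isCompact_sortedTuples (ι : Type*) [Preorder ι] : IsCompact (sortedTuples ι) := by
  convert (isCompact_univ_pi fun _ : ι => isCompact_Icc (a := (0 : ℝ)) (b := 1)).inter_left
    isClosed_monotone using 1
  ext v
  simp only [sortedTuples, mem_inter_iff, mem_univ_pi, mem_ofPred_eq]

variable {a k L : ℕ}

theorem blockIndex_surjective (ha : 0 < a) :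
    (blockIndex a : Fin (a * k + L) → Fin k ⊕ Fin L).Surjective := by
  refine (Sum.map_surjective.mpr ⟨fun q => ?_, Function.surjective_id⟩).comp
    finSumFinEquiv.symm.surjective
  exact ⟨finProdFinEquiv (⟨0, ha⟩, q), by simp⟩

theorem map_comp_blockIndex {α : Type*} (v : Fin k ⊕ Fin L → α) :
    Finset.univ.val.map (v ∘ blockIndex a) =
      a • Finset.univ.val.map (v ∘ Sum.inl) + Finset.univ.val.map (v ∘ Sum.inr) := by
  simp only [map_univ_eq_sum_singleton, ← Equiv.sum_comp finSumFinEquiv, Fintype.sum_sum_type,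
    ← Equiv.sum_comp finProdFinEquiv, Fintype.sum_prod_type]
  simp only [blockIndex, Function.comp_apply, Equiv.symm_apply_apply, Sum.map_inl, Sum.map_inr,
    id_eq, Finset.sum_const, Finset.card_univ, Fintype.card_fin]

theorem eq_or_hasCluster_of_permRel (ha : 0 < a) {v v' : Fin k ⊕ Fin L → ℝ} (hv : Monotone v)
    (hv' : Monotone v') (h : permRel _ _ (v ∘ blockIndex a) (v' ∘ blockIndex a)) :
    v = v' ∨ HasCluster a 0 (v' ∘ Sum.inr) := by
  by_cases hcluster : HasCluster a 0 (v' ∘ Sum.inr)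
  · exact Or.inr hcluster
  rw [permRel_iff_map_univ_eq, map_comp_blockIndex, map_comp_blockIndex] at h
  obtain ⟨hl, hr⟩ := nsmul_add_unique ha h (by simp) fun z =>
    not_le.mp (mt hasCluster_zero_of_le_count hcluster)
  refine Or.inl (funext (Sum.forall.mpr ⟨congrFun ?_, congrFun ?_⟩))
  · exact eq_of_monotone_of_map_univ_eq (hv.comp Sum.inl_mono) (hv'.comp Sum.inl_mono) hl
  · exact eq_of_monotone_of_map_univ_eq (hv.comp Sum.inr_mono) (hv'.comp Sum.inr_mono) hr

end SortedTuples

section BlockSet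

variable {n a k L : ℕ} {X : Type}

theorem bind_replicate_eq_map_comp_blockIndex (a : ℕ) {k L : ℕ} (x : Fin (k + L) → X) :
    (Finset.univ.val.bind fun i : Fin (k + L) =>
        Multiset.replicate (if (i : ℕ) < k then a else 1) (x i)) =
      Finset.univ.val.map ((x ∘ finSumFinEquiv) ∘ blockIndex a) := by
  change ∑ i : Fin (k + L), Multiset.replicate (if (i : ℕ) < k then a else 1) (x i) = _
  rw [Fin.sum_univ_add, map_comp_blockIndex, map_univ_eq_sum_singleton,
    map_univ_eq_sum_singleton, Finset.smul_sum]
  simp [Multiset.nsmul_singleton]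

variable [TopologicalSpace X] {star : X}

/-- The points of the symmetric smash product that are the base point or the class of a multiset
containing `k` disjoint blocks of `a` equal points. -/
def blockSet (n a k : ℕ) (X : Type) [TopologicalSpace X] (star : X) : Set (SymSmash n X star) :=
  symProj n X star '' {y | star ∈ range y ∨
    ∃ Q : Multiset X, Q.card = k ∧ a • Q ≤ Finset.univ.val.map y}

theorem symProj_mem_blockSet_of_mem_range {y : Fin n → X} (h : star ∈ range y) :
    symProj n X star y ∈ blockSet n a k X star :=
  mem_image_of_mem _ (Or.inl h)

theorem blockSet_succ_subset : blockSet n a (k + 1) X star ⊆ blockSet n a k X star := by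
  refine image_mono fun y hy => hy.imp_right ?_
  rintro ⟨Q, hQ, hle⟩
  obtain ⟨x, Q, rfl, hcard⟩ := Multiset.card_eq_succ_iff.mp hQ
  exact ⟨Q, hcard, (nsmul_le_nsmul_right (Multiset.le_cons_self Q x) a).trans hle⟩

theorem blockSet_eq_singleton (hn : 0 < n) (hak : n < a * k) :
    blockSet n a k X star = {symProj n X star fun _ => star} := by
  have hconst : star ∈ range fun _ : Fin n => star := ⟨⟨0, hn⟩, rfl⟩
  refine (subset_singleton_iff.mpr ?_).antisymm
    (singleton_subset_iff.mpr (symProj_mem_blockSet_of_mem_range hconst))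
  rintro _ ⟨y, hy | ⟨Q, rfl, hle⟩, rfl⟩
  · exact symProj_eq_of_mem_range hy hconst
  · have hcard := Multiset.card_le_card hle
    simp only [Multiset.card_nsmul, Multiset.card_map, Finset.card_val, Finset.card_univ,
      Fintype.card_fin] at hcard
    omega

theorem blockSet_eq_range : blockSet (a * k + L) a k X star =
    range fun w : Fin k ⊕ Fin L → X => symProj _ X star (w ∘ blockIndex a) := by
  refine Subset.antisymm ?_ (range_subset_iff.mpr fun w => ?_)
  · rintro _ ⟨y, ⟨i, rfl⟩ | ⟨Q, hQ, hle⟩, rfl⟩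
    · exact ⟨fun _ => y i, symProj_eq_of_mem_range ⟨i, rfl⟩ ⟨i, rfl⟩⟩
    · obtain ⟨R, hR⟩ := Multiset.le_iff_exists_add.mp hle
      have hRcard : R.card = L := by
        simpa [hQ] using (congrArg Multiset.card hR).symm
      obtain ⟨q, rfl⟩ := exists_map_univ_eq hQ
      obtain ⟨r, rfl⟩ := exists_map_univ_eq hRcard
      refine ⟨Sum.elim q r, symProj_eq_of_map_univ_eq ?_⟩
      rw [map_comp_blockIndex, Sum.elim_comp_inl, Sum.elim_comp_inr, hR]
  · refine mem_image_of_mem _ (Or.inr ⟨Finset.univ.val.map (w ∘ Sum.inl), by simp, ?_⟩)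
    rw [map_comp_blockIndex]
    exact Multiset.le_add_right _ _

theorem symProj_mem_blockSet_succ {w : Fin k ⊕ Fin L → X} {s : Finset (Fin L)} {z : X}
    (hs : s.card = a) (hz : ∀ i ∈ s, w (Sum.inr i) = z) :
    symProj _ X star (w ∘ blockIndex a) ∈ blockSet (a * k + L) a (k + 1) X star := by
  refine mem_image_of_mem _ (Or.inr ⟨z ::ₘ Finset.univ.val.map (w ∘ Sum.inl), by simp, ?_⟩)
  have hblock : a • {z} ≤ Finset.univ.val.map (w ∘ Sum.inr) := calc
    a • {z} = s.val.map (w ∘ Sum.inr) := by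
      rw [Multiset.map_congr (f := w ∘ Sum.inr) (g := fun _ => z) rfl hz, Multiset.map_const',
        Finset.card_val, hs, Multiset.nsmul_singleton]
    _ ≤ Finset.univ.val.map (w ∘ Sum.inr) :=
      Multiset.map_le_map (Finset.val_le_iff.mpr s.subset_univ)
  rw [map_comp_blockIndex, ← Multiset.singleton_add, smul_add, add_comm]
  gcongr

theorem stratum_eq_blockSet (a k L : ℕ) (star : X) :
    stratum (a * k + L) (k + L) (fun i => if (i : ℕ) < k then a else 1) X star =
      blockSet (a * k + L) a k X star := by
  rw [blockSet_eq_range]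
  ext p
  constructor
  · rintro ⟨y, rfl, x, hx⟩
    rw [bind_replicate_eq_map_comp_blockIndex] at hx
    exact ⟨x ∘ finSumFinEquiv, symProj_eq_of_map_univ_eq hx.symm⟩
  · rintro ⟨w, rfl⟩
    refine ⟨w ∘ blockIndex a, rfl, w ∘ finSumFinEquiv.symm, ?_⟩
    rw [bind_replicate_eq_map_comp_blockIndex, Function.comp_assoc w, Equiv.symm_comp_self,
      Function.comp_id]

namespace IsLoopParam

variable {E : ℝ → X}

theorem mem_range_of_hasEnd (hE : IsLoopParam star E) (ha : 0 < a) {v : Fin k ⊕ Fin L → ℝ}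
    (h : HasEnd v) : star ∈ range (E ∘ v ∘ blockIndex a) := by
  obtain ⟨i, hi⟩ := h
  obtain ⟨j, rfl⟩ := blockIndex_surjective ha i
  refine ⟨j, (hE.eq_star_iff _ ?_).mpr hi⟩
  rcases hi with hi | hi <;> simp [hi]

theorem hasEnd_of_mem_range (hE : IsLoopParam star E) {v : Fin k ⊕ Fin L → ℝ}
    (hv : v ∈ sortedTuples _) (h : star ∈ range (E ∘ v ∘ blockIndex a)) : HasEnd v :=
  let ⟨i, hi⟩ := h
  ⟨blockIndex a i, (hE.eq_star_iff _ (hv.2 _)).mp hi⟩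

theorem exists_sortedTuple (hE : IsLoopParam star E) {p : SymSmash (a * k + L) X star}
    (hp : p ∈ blockSet (a * k + L) a k X star) :
    ∃ v ∈ sortedTuples (Fin k ⊕ Fin L), symProj _ X star (E ∘ v ∘ blockIndex a) = p := by
  rw [blockSet_eq_range] at hp
  obtain ⟨w, rfl⟩ := hp
  choose u hu hEu using fun i => hE.surjOn (mem_univ (w i))
  let σ : Equiv.Perm (Fin k ⊕ Fin L) :=
    Equiv.sumCongr (Tuple.sort (u ∘ Sum.inl)) (Tuple.sort (u ∘ Sum.inr))
  have hmonotone : Monotone (u ∘ σ) := by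
    rintro _ _ (hij | hij)
    · exact Tuple.monotone_sort (u ∘ Sum.inl) hij
    · exact Tuple.monotone_sort (u ∘ Sum.inr) hij
  refine ⟨u ∘ σ, ⟨hmonotone, fun i => hu _⟩, symProj_eq_of_map_univ_eq ?_⟩
  obtain rfl : E ∘ u = w := funext hEu
  have hinl : Finset.univ.val.map ((E ∘ u) ∘ Sum.inl) =
      Finset.univ.val.map ((E ∘ u ∘ σ) ∘ Sum.inl) :=
    permRel_iff_map_univ_eq.mp ⟨Tuple.sort (u ∘ Sum.inl), rfl⟩
  have hinr : Finset.univ.val.map ((E ∘ u) ∘ Sum.inr) =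
      Finset.univ.val.map ((E ∘ u ∘ σ) ∘ Sum.inr) :=
    permRel_iff_map_univ_eq.mp ⟨Tuple.sort (u ∘ Sum.inr), rfl⟩
  rw [← Function.comp_assoc E, map_comp_blockIndex, map_comp_blockIndex, hinl, hinr]

theorem eq_or_hasCluster_of_symProj_eq (hE : IsLoopParam star E) (ha : 0 < a)
    {v v' : Fin k ⊕ Fin L → ℝ} (hv : v ∈ sortedTuples _) (hv' : v' ∈ sortedTuples _)
    (h : symProj _ X star (E ∘ v ∘ blockIndex a) = symProj _ X star (E ∘ v' ∘ blockIndex a)) :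
    (HasEnd v ∧ HasEnd v') ∨ v = v' ∨
      (permRel _ ℝ (v ∘ blockIndex a) (v' ∘ blockIndex a) ∧
        HasCluster a 0 (v ∘ Sum.inr) ∧ HasCluster a 0 (v' ∘ Sum.inr)) := by
  by_cases hstar : star ∈ range (E ∘ v ∘ blockIndex a) ∧ star ∈ range (E ∘ v' ∘ blockIndex a)
  · exact Or.inl (hstar.imp (hE.hasEnd_of_mem_range hv) (hE.hasEnd_of_mem_range hv'))
  have hpermE := (symProj_eq_iff.mp h).resolve_right hstar
  have hperm : permRel _ ℝ (v ∘ blockIndex a) (v' ∘ blockIndex a) :=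
    hE.permRel_of_permRel_comp (fun _ => hv.2 _) (fun _ => hv'.2 _) hpermE
      fun hv => hstar ⟨hv, hpermE.range_eq ▸ hv⟩
  have hfiber := eq_or_hasCluster_of_permRel ha hv.1 hv'.1 hperm
  have hfiber' := eq_or_hasCluster_of_permRel ha hv'.1 hv.1 (permRel_equivalence.symm hperm)
  grind

end IsLoopParam

end BlockSet

section Homotopy

theorem exists_homotopic_id_of_factorsThrough {K B : Type*} [TopologicalSpace K] [CompactSpace K]
    [TopologicalSpace B] [T2Space B] {π : C(K, B)} (hπ : Function.Surjective π)
    (Φ : C(unitInterval × K, B)) (hzero : ∀ v, Φ (0, v) = π v)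
    (hΦ : ∀ t v v', π v = π v' → Φ (t, v) = Φ (t, v')) :
    ∃ f : C(B, B), (ContinuousMap.id B).Homotopic f ∧ ∀ v, f (π v) = Φ (1, v) := by
  let π' : C(unitInterval × K, unitInterval × B) := (ContinuousMap.id _).prodMap π
  have hπ' : IsQuotientMap π' := π'.continuous.isClosedMap.isQuotientMap π'.continuous
    (Function.surjective_id.prodMap hπ)
  have hfactors : Function.FactorsThrough Φ π' := by
    rintro ⟨t, v⟩ ⟨t', v'⟩ h
    obtain ⟨rfl, hv⟩ := Prod.mk.inj h
    exact hΦ t v v' hv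
  let F : C(unitInterval × B, B) := hπ'.lift Φ hfactors
  have hF (t : unitInterval) (v : K) : F (t, π v) = Φ (t, v) :=
    DFunLike.congr_fun (hπ'.lift_comp Φ hfactors) (t, v)
  refine ⟨F.comp ((ContinuousMap.const B 1).prodMk (ContinuousMap.id B)), ⟨⟨F, ?_, ?_⟩⟩, hF 1⟩
  · intro p
    obtain ⟨v, rfl⟩ := hπ p
    exact (hF 0 v).trans (hzero v)
  · exact fun p => rfl

theorem contractibleSpace_of_homotopic_id {B : Type*} [TopologicalSpace B] {s t : Set B}
    [ContractibleSpace t] (hts : t ⊆ s) {f : C(s, s)} (hf : (ContinuousMap.id s).Homotopic f)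
    (hft : ∀ p, (f p : B) ∈ t) : ContractibleSpace s := by
  rw [contractible_iff_id_nullhomotopic]
  let f' : C(s, t) := ⟨fun p => ⟨f p, hft p⟩, by fun_prop⟩
  let incl : C(t, s) := ⟨inclusion hts, continuous_inclusion hts⟩
  obtain ⟨y, hy⟩ := ((id_nullhomotopic t).comp_right incl).comp_left f'
  exact ⟨y, hf.trans hy⟩

end Homotopy

section Push

variable {a k L : ℕ} {η : ℝ} {H : ℝ → (Fin k ⊕ Fin L → ℝ) → Fin k ⊕ Fin L → ℝ}

/-- A homotopy of tuples that keeps an end point among the entries of the tuple, stays put where the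
last `L` entries contain `a` equal ones, and moves every sorted tuple to one with an end point
among its entries or with a cluster among the last `L` of them. -/
structure IsPush (a : ℕ) (η : ℝ) (H : ℝ → (Fin k ⊕ Fin L → ℝ) → Fin k ⊕ Fin L → ℝ) : Prop where
  continuous : Continuous (Function.uncurry H)
  zero : ∀ v, H 0 v = v
  eq_of_hasCluster : ∀ t v, HasCluster a 0 (v ∘ Sum.inr) → H t v = v
  hasEnd : ∀ t, ∀ v ∈ sortedTuples (Fin k ⊕ Fin L), HasEnd v → HasEnd (H t v)
  hasEnd_or_hasCluster : ∀ v ∈ sortedTuples (Fin k ⊕ Fin L),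
    HasEnd (H 1 v) ∨ HasCluster a η (H 1 v ∘ Sum.inr)

/-- The push `H` followed by the collapse of the `η`-neighbourhoods of the entries, which turns the
clusters created by `H` into equal entries. Both homotopies run simultaneously. -/
noncomputable def collapsedPush (a : ℕ) (η : ℝ)
    (H : ℝ → (Fin k ⊕ Fin L → ℝ) → Fin k ⊕ Fin L → ℝ) (t : ℝ) (v : Fin k ⊕ Fin L → ℝ) :
    Fin k ⊕ Fin L → ℝ :=
  collapse η (H t v ∘ blockIndex a) t ∘ H t v

theorem hasEnd_collapsedPush (hη : 2 * η * Fintype.card (Fin (a * k + L)) < 1) {t : ℝ}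
    {v : Fin k ⊕ Fin L → ℝ} (h : HasEnd (H t v)) : HasEnd (collapsedPush a η H t v) := by
  obtain ⟨i, hi⟩ := h
  refine ⟨i, hi.imp (fun hi => ?_) fun hi => ?_⟩
  · rw [collapsedPush, Function.comp_apply, hi, collapse_zero]
  · rw [collapsedPush, Function.comp_apply, hi, collapse_one hη]

theorem exists_finset_collapsedPush_one_eq (ha : 0 < a) {v : Fin k ⊕ Fin L → ℝ}
    (h : HasCluster a η (H 1 v ∘ Sum.inr)) :
    ∃ s : Finset (Fin L), s.card = a ∧ ∃ z, ∀ i ∈ s, collapsedPush a η H 1 v (Sum.inr i) = z := by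
  obtain ⟨s, hs, hdist⟩ := h
  obtain ⟨i₀, hi₀⟩ := Finset.card_pos.mp (hs ▸ ha)
  obtain ⟨j, hj⟩ := blockIndex_surjective ha (Sum.inr i₀ : Fin k ⊕ Fin L)
  exact ⟨s, hs, _, fun i hi => collapse_one_eq_of_abs_sub_le (i := j) <| by
    simpa [Real.dist_eq, hj] using hdist i hi i₀ hi₀⟩

namespace IsPush

theorem continuous_collapsedPush (hH : IsPush a η H)
    (hη : 2 * η * Fintype.card (Fin (a * k + L)) < 1) :
    Continuous (Function.uncurry (collapsedPush a η H)) := by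
  have hcontinuous (i : Fin k ⊕ Fin L) :
      Continuous fun p : ℝ × (Fin k ⊕ Fin L → ℝ) => H p.1 p.2 i :=
    (continuous_apply i).comp hH.continuous
  exact continuous_pi fun i => continuous_collapse hη
    (continuous_pi fun j => hcontinuous (blockIndex a j)) continuous_fst (hcontinuous i)

theorem collapsedPush_zero (hH : IsPush a η H) (v : Fin k ⊕ Fin L → ℝ) :
    collapsedPush a η H 0 v = v := by
  funext i
  rw [collapsedPush, Function.comp_apply, collapse_zero_left, hH.zero]

theorem permRel_collapsedPush (hH : IsPush a η H) {v v' : Fin k ⊕ Fin L → ℝ}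
    (hperm : permRel _ ℝ (v ∘ blockIndex a) (v' ∘ blockIndex a))
    (hv : HasCluster a 0 (v ∘ Sum.inr)) (hv' : HasCluster a 0 (v' ∘ Sum.inr)) (t : ℝ) :
    permRel _ ℝ (collapsedPush a η H t v ∘ blockIndex a)
      (collapsedPush a η H t v' ∘ blockIndex a) := by
  obtain ⟨σ, hσ⟩ := hperm
  refine ⟨σ, ?_⟩
  rw [collapsedPush, collapsedPush, hH.eq_of_hasCluster t v hv, hH.eq_of_hasCluster t v' hv', ← hσ,
    collapse_comp_perm]
  exact congrArg (collapse η (v ∘ blockIndex a) t ∘ ·) hσ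

variable {X : Type} [TopologicalSpace X] {star : X} {E : ℝ → X}

theorem symProj_collapsedPush_congr (hH : IsPush a η H) (hE : IsLoopParam star E) (ha : 0 < a)
    (hη : 2 * η * Fintype.card (Fin (a * k + L)) < 1) {v v' : Fin k ⊕ Fin L → ℝ}
    (hv : v ∈ sortedTuples _) (hv' : v' ∈ sortedTuples _)
    (h : symProj _ X star (E ∘ v ∘ blockIndex a) = symProj _ X star (E ∘ v' ∘ blockIndex a))
    (t : ℝ) :
    symProj _ X star (E ∘ collapsedPush a η H t v ∘ blockIndex a) =
      symProj _ X star (E ∘ collapsedPush a η H t v' ∘ blockIndex a) := by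
  have mem_range {w : Fin k ⊕ Fin L → ℝ} (hw : w ∈ sortedTuples _) (hend : HasEnd w) :
      star ∈ range (E ∘ collapsedPush a η H t w ∘ blockIndex a) :=
    hE.mem_range_of_hasEnd ha (hasEnd_collapsedPush hη (hH.hasEnd t w hw hend))
  rcases hE.eq_or_hasCluster_of_symProj_eq ha hv hv' h with
    ⟨hend, hend'⟩ | rfl | ⟨hperm, hcluster, hcluster'⟩
  · exact symProj_eq_of_mem_range (mem_range hv hend) (mem_range hv' hend')
  · rfl
  · obtain ⟨σ, hσ⟩ := hH.permRel_collapsedPush hperm hcluster hcluster' t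
    exact symProj_eq_iff.mpr (Or.inl ⟨σ, congrArg (E ∘ ·) hσ⟩)

theorem symProj_collapsedPush_one_mem (hH : IsPush a η H) (hE : IsLoopParam star E) (ha : 0 < a)
    (hη : 2 * η * Fintype.card (Fin (a * k + L)) < 1) {v : Fin k ⊕ Fin L → ℝ}
    (hv : v ∈ sortedTuples _) :
    symProj _ X star (E ∘ collapsedPush a η H 1 v ∘ blockIndex a) ∈
      blockSet (a * k + L) a (k + 1) X star := by
  rcases hH.hasEnd_or_hasCluster v hv with hend | hcluster
  · exact symProj_mem_blockSet_of_mem_range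
      (hE.mem_range_of_hasEnd ha (hasEnd_collapsedPush hη hend))
  · obtain ⟨s, hs, z, hz⟩ := exists_finset_collapsedPush_one_eq ha hcluster
    exact symProj_mem_blockSet_succ (w := E ∘ collapsedPush a η H 1 v) hs
      fun i hi => congrArg E (hz i hi)

theorem exists_homotopic_id [CompactSpace X] [T2Space X] (hH : IsPush a η H)
    (hE : IsLoopParam star E) (ha : 0 < a) (hη : 2 * η * Fintype.card (Fin (a * k + L)) < 1) :
    ∃ f : C(blockSet (a * k + L) a k X star, blockSet (a * k + L) a k X star),
      (ContinuousMap.id _).Homotopic f ∧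
        ∀ p, (f p : SymSmash _ X star) ∈ blockSet (a * k + L) a (k + 1) X star := by
  have : CompactSpace (sortedTuples (Fin k ⊕ Fin L)) :=
    isCompact_iff_compactSpace.mp (isCompact_sortedTuples _)
  have mem_blockSet (v : Fin k ⊕ Fin L → ℝ) :
      symProj _ X star (E ∘ v ∘ blockIndex a) ∈ blockSet (a * k + L) a k X star :=
    blockSet_eq_range.ge ⟨E ∘ v, rfl⟩
  have continuous_toBlockSet : Continuous fun v : Fin k ⊕ Fin L → ℝ =>
      (⟨_, mem_blockSet v⟩ : blockSet (a * k + L) a k X star) := by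
    refine (isQuotientMap_symProj.continuous.comp ?_).subtype_mk _
    exact continuous_pi fun i => hE.continuous.comp (continuous_apply _)
  let π : C(sortedTuples (Fin k ⊕ Fin L), blockSet (a * k + L) a k X star) :=
    ⟨fun v => ⟨_, mem_blockSet v⟩, continuous_toBlockSet.comp continuous_subtype_val⟩
  have hπ : Function.Surjective π := by
    rintro ⟨p, hp⟩
    obtain ⟨v, hv, rfl⟩ := hE.exists_sortedTuple hp
    exact ⟨⟨v, hv⟩, rfl⟩
  let Φ : C(unitInterval × sortedTuples (Fin k ⊕ Fin L), blockSet (a * k + L) a k X star) :=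
    ⟨fun p => ⟨_, mem_blockSet (collapsedPush a η H p.1 p.2)⟩,
      continuous_toBlockSet.comp ((hH.continuous_collapsedPush hη).comp
        (continuous_subtype_val.prodMap continuous_subtype_val))⟩
  obtain ⟨f, hf, hfπ⟩ := exists_homotopic_id_of_factorsThrough hπ Φ
    (fun v => Subtype.ext (by simp [π, Φ, hH.collapsedPush_zero]))
    fun t v v' h => Subtype.ext <|
      hH.symProj_collapsedPush_congr hE ha hη v.2 v'.2 (congrArg Subtype.val h) t
  refine ⟨f, hf, fun p => ?_⟩
  obtain ⟨v, rfl⟩ := hπ p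
  rw [hfπ]
  exact hH.symProj_collapsedPush_one_mem hE ha hη v.2

end IsPush

end Push

section PushFirst

variable {a k L : ℕ} {η : ℝ}

/-- The push that contracts the first of `k + 1` entries towards `0`, at a rate given by
`clusterGauge` for the last `L` entries. -/
noncomputable def pushFirst (a : ℕ) (η t : ℝ) (v : Fin (k + 1) ⊕ Fin L → ℝ) :
    Fin (k + 1) ⊕ Fin L → ℝ :=
  Function.update v (Sum.inl 0) ((1 - t * clusterGauge a η (v ∘ Sum.inr)) * v (Sum.inl 0))

theorem pushFirst_comp_inr (t : ℝ) (v : Fin (k + 1) ⊕ Fin L → ℝ) :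
    pushFirst a η t v ∘ Sum.inr = v ∘ Sum.inr :=
  Function.update_comp_eq_of_notMem_range _ _ (by simp)

theorem pushFirst_eq_self {t : ℝ} {v : Fin (k + 1) ⊕ Fin L → ℝ}
    (h : t * clusterGauge a η (v ∘ Sum.inr) = 0) : pushFirst a η t v = v := by
  rw [pushFirst, h, sub_zero, one_mul, Function.update_eq_self]

theorem pushFirst_eq_zero (t : ℝ) {v : Fin (k + 1) ⊕ Fin L → ℝ} {i : Fin (k + 1) ⊕ Fin L}
    (hi : v i = 0) : pushFirst a η t v i = 0 := by
  by_cases hi₀ : i = Sum.inl 0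
  · subst hi₀
    rw [pushFirst, Function.update_self, hi, mul_zero]
  · rw [pushFirst, Function.update_of_ne hi₀, hi]

/-- If the first of the `k + 1 ≥ 2` entries is `1`, then so is the last one, which does not move. -/
theorem hasEnd_pushFirst (hk : 0 < k) (t : ℝ) {v : Fin (k + 1) ⊕ Fin L → ℝ}
    (hv : v ∈ sortedTuples _) (hend : HasEnd v) : HasEnd (pushFirst a η t v) := by
  obtain ⟨i, hi | hi⟩ := hend
  · exact ⟨i, Or.inl (pushFirst_eq_zero t hi)⟩
  by_cases hi₀ : i = Sum.inl 0
  · subst hi₀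
    have hlast : v (Sum.inl (Fin.last k)) = 1 :=
      (hv.2 _).2.antisymm (hi ▸ hv.1 (Sum.inl_le_inl_iff.mpr (Fin.zero_le _)))
    refine ⟨Sum.inl (Fin.last k), Or.inr ?_⟩
    rwa [pushFirst, Function.update_of_ne]
    simpa [Fin.ext_iff] using hk.ne'
  · exact ⟨i, Or.inr (by rwa [pushFirst, Function.update_of_ne hi₀])⟩

theorem isPush_pushFirst (hk : 0 < k) (hη : 0 < η) :
    IsPush a η (pushFirst a η : ℝ → (Fin (k + 1) ⊕ Fin L → ℝ) → _) where
  continuous := by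
    have hgauge : Continuous fun p : ℝ × (Fin (k + 1) ⊕ Fin L → ℝ) =>
        clusterGauge a η (p.2 ∘ Sum.inr) :=
      continuous_clusterGauge.comp (by fun_prop)
    exact continuous_snd.update _ (by fun_prop)
  zero v := pushFirst_eq_self (zero_mul _)
  eq_of_hasCluster t v h := pushFirst_eq_self (by rw [h.clusterGauge_eq_zero, mul_zero])
  hasEnd t _ hv := hasEnd_pushFirst hk t hv
  hasEnd_or_hasCluster v _ := by
    by_cases hgauge : clusterGauge a η (v ∘ Sum.inr) = 1
    · refine Or.inl ⟨Sum.inl 0, Or.inl ?_⟩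
      rw [pushFirst, Function.update_self, hgauge, mul_one, sub_self, zero_mul]
    · rw [pushFirst_comp_inr]
      exact Or.inr (hasCluster_of_clusterGauge_ne_one hη hgauge)

end PushFirst

section PushSlide

/-- The tuple `r` shifted by one, so that entry `j` of `r` has index `j + 1` and its predecessor has
index `j`. It starts with `0`; it continues with `2`, which is far away from every entry of a tuple
in `[0, 1]`. -/
def padded {L : ℕ} (r : Fin L → ℝ) : ℕ → ℝ
  | 0 => 0
  | j + 1 => if h : j < L then r ⟨j, h⟩ else 2

/-- The distance by which entry `j` of a tuple, shifted as in `padded`, slides towards its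
predecessor. Only entries whose index is divisible by `a` slide. They reach their predecessor unless
the `a` entries from `j` on lie within a distance `η`. -/
noncomputable def slide (a : ℕ) (η : ℝ) (P : ℕ → ℝ) (j : ℕ) : ℝ :=
  if a ∣ j then (P (j + 1) - P j) * min 1 ((P (j + a) - P (j + 1)) / η) else 0

/-- The push that slides the last `L` entries, at a rate given by `clusterGauge`. -/
noncomputable def pushSlide (a : ℕ) (η : ℝ) {k L : ℕ} (t : ℝ) (v : Fin k ⊕ Fin L → ℝ) :
    Fin k ⊕ Fin L → ℝ :=
  Sum.elim (v ∘ Sum.inl) fun j =>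
    v (Sum.inr j) - t * clusterGauge a (η ^ 2 / 2) (v ∘ Sum.inr) *
      slide a η (padded (v ∘ Sum.inr)) j

section Padded

variable {L : ℕ} {r : Fin L → ℝ}

theorem padded_succ (r : Fin L → ℝ) (j : Fin L) : padded r (j + 1) = r j := by
  simp [padded]

theorem padded_of_lt {j : ℕ} (hj : L < j) : padded r j = 2 := by
  obtain ⟨j, rfl⟩ := Nat.exists_eq_add_one_of_ne_zero (Nat.ne_zero_of_lt hj)
  simp [padded, show ¬j < L by omega]

theorem continuous_padded (j : ℕ) : Continuous fun r : Fin L → ℝ => padded r j := by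
  cases j with
  | zero => exact continuous_const
  | succ j => by_cases hj : j < L <;> simp only [padded, hj, dite_true, dite_false] <;> fun_prop

theorem monotone_padded (hr : r ∈ sortedTuples (Fin L)) : Monotone (padded r) := by
  refine monotone_nat_of_le_succ fun j => ?_
  rcases lt_or_ge j L with hj | hj
  · rw [padded_succ r ⟨j, hj⟩]
    cases j with
    | zero => exact (hr.2 _).1
    | succ j =>
      rw [padded_succ r ⟨j, j.lt_succ_self.trans hj⟩]
      exact hr.1 (Fin.le_def.mpr j.le_succ)
  · rw [padded_of_lt (Nat.lt_succ_of_le hj)]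
    cases j with
    | zero => exact zero_le_two
    | succ j =>
      rw [padded]
      split_ifs
      exacts [(hr.2 _).2.trans one_le_two, le_rfl]

end Padded

section Slide

variable {a : ℕ} {η : ℝ} {P : ℕ → ℝ}

theorem slide_of_not_dvd {j : ℕ} (hj : ¬a ∣ j) : slide a η P j = 0 :=
  if_neg hj

theorem slide_eq_sub {j : ℕ} (hη : 0 < η) (hj : a ∣ j) (h : η ≤ P (j + a) - P (j + 1)) :
    slide a η P j = P (j + 1) - P j := by
  rw [slide, if_pos hj, min_eq_left ((one_le_div hη).mpr h), mul_one]

theorem slide_mem_Icc (hη : 0 ≤ η) (ha : 0 < a) (hP : Monotone P) (j : ℕ) :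
    slide a η P j ∈ Icc 0 (P (j + 1) - P j) := by
  have hgap : 0 ≤ P (j + 1) - P j := sub_nonneg.mpr (hP j.le_succ)
  have hlen : 0 ≤ P (j + a) - P (j + 1) := sub_nonneg.mpr (hP (by omega))
  unfold slide
  split_ifs
  · exact ⟨by positivity, mul_le_of_le_one_right hgap (min_le_left _ _)⟩
  · exact ⟨le_rfl, hgap⟩

theorem slide_le_div (hη : 0 ≤ η) (ha : 0 < a) (hP : Monotone P) {j : ℕ}
    (hgap : P (j + 1) - P j ≤ 1) : slide a η P j ≤ (P (j + a) - P (j + 1)) / η := by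
  have hlen : 0 ≤ (P (j + a) - P (j + 1)) / η := div_nonneg (sub_nonneg.mpr (hP (by omega))) hη
  unfold slide
  split_ifs
  · exact (mul_le_of_le_one_left (by positivity) hgap).trans (min_le_right _ _)
  · exact hlen

/-- Go through the blocks of length `a` from the last one down: the first entry of a block of length
at least `η` reaches the block below, which is then either a cluster or also has length at least
`η`. -/
theorem slide_reaches_zero_or_cluster (hη : 0 < η) (hP : Monotone P) {m : ℕ}
    (h : η ≤ P (a * m + a) - P (a * m + 1)) :
    P 1 - slide a η P 0 = P 0 ∨
      ∃ j < m, ∀ i, a * j + 1 ≤ i → i < a * j + 1 + a →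
        P (i + 1) - slide a η P i ∈ Icc (P (a * j + 1)) (P (a * j + 1) + η) := by
  induction m with
  | zero =>
    left
    rw [slide_eq_sub hη (dvd_zero a) (by simpa using h), sub_sub_cancel]
  | succ m ih =>
    by_cases hm : η ≤ P (a * m + a) - P (a * m + 1)
    · exact (ih hm).imp_right fun ⟨j, hj, hcluster⟩ => ⟨j, hj.trans m.lt_succ_self, hcluster⟩
    refine Or.inr ⟨m, m.lt_succ_self, fun i hi hi' => ?_⟩
    obtain ⟨i', hi'm, hi'a, hi'eq⟩ :
        ∃ i' ≤ a * m + a, a * m + 1 ≤ i' ∧ P (i + 1) - slide a η P i = P i' := by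
      rcases (Nat.lt_succ_iff.mp (by omega : i < a * m + a + 1)).eq_or_lt with rfl | hlt
      · refine ⟨a * m + a, le_rfl, hi, ?_⟩
        rw [← Nat.mul_succ, slide_eq_sub hη (dvd_mul_right a _) h, sub_sub_cancel]
      · refine ⟨i + 1, hlt, by omega, ?_⟩
        have hdvd : ¬a ∣ i := Nat.not_dvd_of_lt_of_lt_mul_succ (by omega) hlt
        rw [slide_of_not_dvd hdvd, sub_zero]
    rw [hi'eq]
    exact ⟨hP hi'a, by linarith [hP hi'm]⟩

end Slide

variable {a k L m ε : ℕ} {η : ℝ}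

theorem mem_sortedTuples_inr {v : Fin k ⊕ Fin L → ℝ} (hv : v ∈ sortedTuples _) :
    v ∘ Sum.inr ∈ sortedTuples (Fin L) :=
  ⟨hv.1.comp Sum.inr_mono, fun i => hv.2 (Sum.inr i)⟩

theorem pushSlide_eq_self {t : ℝ} {v : Fin k ⊕ Fin L → ℝ}
    (h : t * clusterGauge a (η ^ 2 / 2) (v ∘ Sum.inr) = 0) : pushSlide a η t v = v := by
  simp only [pushSlide, h, zero_mul, sub_zero]
  exact Sum.elim_comp_inl_inr v

theorem continuous_pushSlide :
    Continuous (Function.uncurry (pushSlide a η : ℝ → (Fin k ⊕ Fin L → ℝ) → _)) := by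
  have hgauge : Continuous fun p : ℝ × (Fin k ⊕ Fin L → ℝ) =>
      clusterGauge a (η ^ 2 / 2) (p.2 ∘ Sum.inr) :=
    continuous_clusterGauge.comp (by fun_prop)
  have hpadded (j : ℕ) : Continuous fun p : ℝ × (Fin k ⊕ Fin L → ℝ) =>
      padded (p.2 ∘ Sum.inr) j :=
    (continuous_padded j).comp (by fun_prop)
  have hslide (j : ℕ) : Continuous fun p : ℝ × (Fin k ⊕ Fin L → ℝ) =>
      slide a η (padded (p.2 ∘ Sum.inr)) j := by
    unfold slide
    split_ifs <;> fun_prop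
  refine continuous_pi (Sum.forall.mpr ⟨fun i => ?_, fun j => ?_⟩)
  · simp only [Function.uncurry_def, pushSlide, Sum.elim_inl]
    fun_prop
  · simp only [Function.uncurry_def, pushSlide, Sum.elim_inr]
    fun_prop

/-- Since `2 ≤ ε`, the index of the last entry is not divisible by `a`, so this entry, which is `1`
as soon as some other one is, does not move. -/
theorem hasEnd_pushSlide (hε : 2 ≤ ε) (hεa : ε < a) (hη : 0 ≤ η) (t : ℝ)
    {v : Fin k ⊕ Fin (a * m + ε) → ℝ} (hv : v ∈ sortedTuples _) (hend : HasEnd v) :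
    HasEnd (pushSlide a η t v) := by
  have hr := mem_sortedTuples_inr hv
  obtain ⟨i | i, hi⟩ := hend
  · exact ⟨Sum.inl i, hi⟩
  rcases hi with hi | hi
  · have hslide : slide a η (padded (v ∘ Sum.inr)) i = 0 := by
      have hP := monotone_padded hr
      have hmem := slide_mem_Icc hη (by omega : 0 < a) hP i
      rw [padded_succ, Function.comp_apply, hi] at hmem
      have hpred : 0 ≤ padded (v ∘ Sum.inr) i := hP i.1.zero_le
      linarith [hmem.1, hmem.2]
    exact ⟨Sum.inr i, Or.inl (by simp [pushSlide, hslide, hi])⟩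
  · let last : Fin (a * m + ε) := ⟨a * m + ε - 1, by omega⟩
    have hlast : v (Sum.inr last) = 1 :=
      (hv.2 _).2.antisymm (hi ▸ hr.1 (Fin.le_def.mpr (by simp only [last]; omega)))
    have hdvd : ¬a ∣ last := Nat.not_dvd_of_lt_of_lt_mul_succ (k := m)
      (by simp only [last]; omega) (by simp only [last, mul_add]; omega)
    exact ⟨Sum.inr last, Or.inr (by simp [pushSlide, slide_of_not_dvd hdvd, hlast])⟩

theorem hasEnd_or_hasCluster_pushSlide_one (hε : 2 ≤ ε) (hεa : ε < a) (hη : 0 < η) (hη₁ : η ≤ 1)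
    {v : Fin k ⊕ Fin (a * m + ε) → ℝ} (hv : v ∈ sortedTuples _)
    (hgauge : clusterGauge a (η ^ 2 / 2) (v ∘ Sum.inr) = 1) :
    HasEnd (pushSlide a η 1 v) ∨ HasCluster a η (pushSlide a η 1 v ∘ Sum.inr) := by
  have hr := mem_sortedTuples_inr hv
  have pushSlide_inr (i : Fin (a * m + ε)) : pushSlide a η 1 v (Sum.inr i) =
      padded (v ∘ Sum.inr) (i + 1) - slide a η (padded (v ∘ Sum.inr)) i := by
    simp [pushSlide, hgauge, padded_succ]
  have htop : η ≤ padded (v ∘ Sum.inr) (a * m + a) - padded (v ∘ Sum.inr) (a * m + 1) := by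
    have hle : v (Sum.inr ⟨a * m, by omega⟩) ≤ 1 := (hv.2 _).2
    rw [padded_of_lt (by omega), padded_succ (v ∘ Sum.inr) ⟨a * m, by omega⟩, Function.comp_apply]
    linarith
  rcases slide_reaches_zero_or_cluster hη (monotone_padded hr) htop with
    hzero | ⟨j, hj, hcluster⟩
  · exact Or.inl ⟨Sum.inr ⟨0, by omega⟩, Or.inl ((pushSlide_inr _).trans hzero)⟩
  · have hlen : a * j + 1 + a ≤ a * m + ε := by
      have := Nat.mul_le_mul_left a hj
      rw [Nat.mul_succ] at this
      omega
    exact Or.inr (hasCluster_of_window hlen fun i hi hi' =>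
      (pushSlide_inr i).symm ▸ hcluster i hi hi')

/-- A cluster within `η ^ 2 / 2` survives: its first entry slides by at most `η / 2`, and none of
the others passes its predecessor. -/
theorem hasCluster_pushSlide_one (ha : 0 < a) (hη : 0 < η) (hη₁ : η ≤ 1)
    {v : Fin k ⊕ Fin L → ℝ} (hv : v ∈ sortedTuples _)
    (hcluster : HasCluster a (η ^ 2 / 2) (v ∘ Sum.inr)) :
    HasCluster a η (pushSlide a η 1 v ∘ Sum.inr) := by
  have hr := mem_sortedTuples_inr hv
  have hP := monotone_padded hr
  set P := padded (v ∘ Sum.inr)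
  set g := clusterGauge a (η ^ 2 / 2) (v ∘ Sum.inr)
  have hg01 : g ∈ Icc 0 1 := clusterGauge_mem_Icc (by positivity) _
  obtain ⟨p, q, hpq, hwidth⟩ := hcluster.exists_window ha hr.1
  rw [← padded_succ (v ∘ Sum.inr), ← padded_succ (v ∘ Sum.inr), ← hpq] at hwidth
  refine hasCluster_of_window (p := p) (c := P (p + 1) - η / 2) (by omega) fun i hpi hip => ?_
  obtain ⟨hslide_nonneg, hslide_le⟩ := slide_mem_Icc hη.le ha hP i
  have hslide : P (p + 1) - η / 2 ≤ P (i + 1) - slide a η P i := by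
    rcases hpi.eq_or_lt with hpi | hpi
    · have hgap : P (p + 1) - P p ≤ 1 := by
        have hle : P (p + 1) ≤ 1 := (padded_succ _ p).trans_le (hr.2 p).2
        linarith [show 0 ≤ P p from hP p.1.zero_le]
      have hhalf : (P (p + a) - P (p + 1)) / η ≤ η / 2 := by
        rw [div_le_iff₀ hη]
        linarith
      rw [← hpi]
      linarith [slide_le_div hη.le ha hP hgap]
    · linarith [hP (show (p : ℕ) + 1 ≤ i from hpi)]
  have hupper : P (i + 1) ≤ P (p + a) := hP hip
  have hsq : η ^ 2 ≤ η := pow_le_of_le_one hη.le hη₁ two_ne_zero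
  have heq : pushSlide a η 1 v (Sum.inr i) = P (i + 1) - g * slide a η P i := by
    simp [pushSlide, P, g, padded_succ]
  rw [Function.comp_apply, heq]
  constructor
  · linarith [mul_le_of_le_one_left hslide_nonneg hg01.2]
  · linarith [mul_nonneg hg01.1 hslide_nonneg]

theorem isPush_pushSlide (hε : 2 ≤ ε) (hεa : ε < a) (hη : 0 < η) (hη₁ : η ≤ 1) :
    IsPush a η (pushSlide a η : ℝ → (Fin k ⊕ Fin (a * m + ε) → ℝ) → _) where
  continuous := continuous_pushSlide
  zero v := pushSlide_eq_self (zero_mul _)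
  eq_of_hasCluster t v h := pushSlide_eq_self (by rw [h.clusterGauge_eq_zero, mul_zero])
  hasEnd t v hv := hasEnd_pushSlide hε hεa hη.le t hv
  hasEnd_or_hasCluster v hv := by
    by_cases hgauge : clusterGauge a (η ^ 2 / 2) (v ∘ Sum.inr) = 1
    · exact hasEnd_or_hasCluster_pushSlide_one hε hεa hη hη₁ hv hgauge
    · exact Or.inr (hasCluster_pushSlide_one (by omega) hη hη₁ hv
        (hasCluster_of_clusterGauge_ne_one (by positivity) hgauge))

end PushSlide

section Contractible

variable {X : Type} [TopologicalSpace X] [CompactSpace X] [T2Space X] {star : X} {E : ℝ → X}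

theorem exists_isPush {a k L : ℕ} (ha : 0 < a) (hcond : 2 ≤ k ∨ 2 ≤ L % a) {η : ℝ} (hη : 0 < η)
    (hη₁ : η ≤ 1) : ∃ H : ℝ → (Fin k ⊕ Fin L → ℝ) → Fin k ⊕ Fin L → ℝ, IsPush a η H := by
  rcases hcond with hk | hL
  · obtain ⟨k, rfl⟩ := Nat.exists_eq_add_one_of_ne_zero (Nat.ne_zero_of_lt hk)
    exact ⟨_, isPush_pushFirst (Nat.succ_lt_succ_iff.mp hk) hη⟩
  · rw [← Nat.div_add_mod L a]
    exact ⟨_, isPush_pushSlide hL (Nat.mod_lt L ha) hη hη₁⟩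

theorem contractibleSpace_blockSet_of_succ {a k L : ℕ} (hE : IsLoopParam star E) (ha : 0 < a)
    (hcond : 2 ≤ k ∨ 2 ≤ L % a)
    (hsucc : ContractibleSpace (blockSet (a * k + L) a (k + 1) X star)) :
    ContractibleSpace (blockSet (a * k + L) a k X star) := by
  obtain ⟨η, ⟨hη, hη₁⟩, hηn⟩ :
      ∃ η : ℝ, (0 < η ∧ η ≤ 1) ∧ 2 * η * Fintype.card (Fin (a * k + L)) < 1 := by
    obtain ⟨η, hη, hη_lt⟩ := exists_pos_mul_lt one_pos (2 * Fintype.card (Fin (a * k + L)) + 1 : ℝ)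
    have hcard : 0 ≤ 2 * η * Fintype.card (Fin (a * k + L)) := by positivity
    exact ⟨η, ⟨hη, by linarith⟩, by linarith⟩
  obtain ⟨H, hH⟩ := exists_isPush ha hcond hη hη₁
  obtain ⟨f, hf, hmem⟩ := hH.exists_homotopic_id (X := X) hE ha hηn
  exact contractibleSpace_of_homotopic_id blockSet_succ_subset hf hmem

theorem contractibleSpace_blockSet {n a k : ℕ} (hE : IsLoopParam star E) (hn : 0 < n)
    (ha : 0 < a) (hcond : 2 ≤ k ∨ 2 ≤ n % a) : ContractibleSpace (blockSet n a k X star) := by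
  obtain ⟨d, hd⟩ : ∃ d, n < a * (k + d) :=
    ⟨n + 1, (Nat.lt_succ_self n).trans_le
      ((Nat.le_add_left _ k).trans (Nat.le_mul_of_pos_left _ ha))⟩
  induction d generalizing k with
  | zero =>
    rw [blockSet_eq_singleton hn (by rwa [Nat.add_zero] at hd)]
    infer_instance
  | succ d ih =>
    have hsucc : ContractibleSpace (blockSet n a (k + 1) X star) :=
      ih (hcond.imp_left Nat.le_succ_of_le) (by rwa [Nat.add_right_comm, Nat.add_assoc])
    rcases lt_or_ge n (a * k) with hlt | hge
    · rw [blockSet_eq_singleton hn hlt]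
      infer_instance
    · obtain ⟨L, rfl⟩ := Nat.exists_eq_add_of_le hge
      rw [Nat.mul_add_mod] at hcond
      exact contractibleSpace_blockSet_of_succ hE ha hcond hsucc

end Contractible

/-- if `k ≥ 2` or `ε ≥ 2` (where `l = a·m + ε`, `0 ≤ ε ≤ a−1`), the
closed stratum `Σ_{(a^k,1^l)}` of `(S^1)^{(ak+l)}` is contractible. -/
theorem stratum_ak_ones_contractible (a k l m ε : ℕ)
    (ha : 2 ≤ a) (hk : 1 ≤ k) (hl : 1 ≤ l)
    (hlme : l = a * m + ε) (hε : ε ≤ a - 1) (hcond : 2 ≤ k ∨ 2 ≤ ε)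
    (star : Circle1) :
    ContractibleSpace
      ↥(stratum (a * k + l) (k + l)
        (fun i => if (i : ℕ) < k then a else 1) Circle1 star) := by
  rw [stratum_eq_blockSet]
  obtain ⟨E, hE⟩ := exists_isLoopParam_circle1 star
  refine contractibleSpace_blockSet hE (by omega) (by omega) (hcond.imp_right fun h => ?_)
  have hmod : (a * k + l) % a = ε := by
    rw [Nat.mul_add_mod, hlme, Nat.mul_add_mod, Nat.mod_eq_of_lt (by omega)]
  rwa [hmod]
end
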